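/- Let C be an algebraically closed field of characteristic zero and let h be a nonzero element of the rational function field C(x₁). Equip the rational function field F = C(x₁,x₂) in two variables with the unique derivation D satisfying D(c) = 0 for all c ∈ C, D(x₁) = x₂, and D(x₂) = x₂·h(x₁). Then F contains a constant of D not lying in C if and only if there exists g ∈ C(x₁) with h = ∂g/∂x₁ (the derivative of the rational function g with respect to x₁). -/

import Mathlib

universe u

/-- A bundled differential field of characteristic zero: a field together with a derivation,
given as a raw function satisfying additivity and the Leibniz rule. -/
structure DFld : Type (u + 1) where
  carrier : Type u
  [fieldInst : Field carrier]
  [charZeroInst : CharZero carrier]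
  deriv : carrier → carrier
  deriv_add : ∀ a b, deriv (a + b) = deriv a + deriv b
  deriv_mul : ∀ a b, deriv (a * b) = deriv a * b + a * deriv b

attribute [instance] DFld.fieldInst DFld.charZeroInst

/-- The result of applying the monic linear differential operator
`∂^n + a_{n-1} ∂^{n-1} + ⋯ + a_1 ∂ + a_0` (with coefficients `a`) to `y`,
where the derivation is given by `D`. -/
def LApply {E : Type u} [Field E] (D : E → E) (n : ℕ) (a : Fin n → E) (y : E) : E :=
  D^[n] y + ∑ i : Fin n, a i * D^[(i : ℕ)] y

/-- `diffGen D k S` is the smallest differential subfield (w.r.t. the derivation `D`)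
containing the subfield `k` and the set `S`; i.e. the differential field `k⟨S⟩`. -/
def diffGen {E : Type u} [Field E] (D : E → E) (k : Subfield E) (S : Set E) : Subfield E :=
  sInf {F : Subfield E | k ≤ F ∧ S ⊆ ↑F ∧ ∀ x ∈ F, D x ∈ F}

/-- The subfield of constants of a differential subfield `k`: `{x ∈ k | D x = 0}`. -/
def constantsOf {E : Type u} [Field E] (D : Derivation ℤ E E) (k : Subfield E) : Subfield E where
  carrier := {x | x ∈ k ∧ D x = 0}
  zero_mem' := ⟨k.zero_mem, map_zero D⟩
  one_mem' := ⟨k.one_mem, D.map_one_eq_zero⟩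
  add_mem' := by
    rintro a b ⟨hak, ha0⟩ ⟨hbk, hb0⟩
    exact ⟨k.add_mem hak hbk, by rw [map_add, ha0, hb0, add_zero]⟩
  neg_mem' := by
    rintro a ⟨hak, ha0⟩
    exact ⟨k.neg_mem hak, by rw [map_neg, ha0, neg_zero]⟩
  mul_mem' := by
    rintro a b ⟨hak, ha0⟩ ⟨hbk, hb0⟩
    exact ⟨k.mul_mem hak hbk, by
      rw [Derivation.leibniz, ha0, hb0, smul_zero, smul_zero, add_zero]⟩
  inv_mem' := by
    rintro x ⟨hxk, hx0⟩
    refine ⟨k.inv_mem hxk, ?_⟩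
    by_cases h : x = 0
    · simp [h]
    · have h1 : D (x * x⁻¹) = 0 := by rw [mul_inv_cancel₀ h, D.map_one_eq_zero]
      rw [Derivation.leibniz, hx0, smul_zero, add_zero, smul_eq_mul] at h1
      exact (mul_eq_zero.mp h1).resolve_left h

/-- `F` is a Picard–Vessiot extension of `k` (inside a common differential field) for the
monic linear differential operator of order `n` with (lower-order) coefficients `a`:
both are differential subfields, the constants of `F` equal the constants of `k`,
the coefficients lie in `k`, and `F` is differentially generated over `k` by an
`n`-dimensional vector space (over the constants) of solutions. -/
def IsPVWith {E : Type u} [Field E] (D : E → E) (k F : Subfield E) (n : ℕ)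
    (a : Fin n → E) : Prop :=
  k ≤ F ∧ (∀ x ∈ k, D x ∈ k) ∧ (∀ x ∈ F, D x ∈ F) ∧
  (∀ x ∈ F, D x = 0 → x ∈ k) ∧
  (∀ i, a i ∈ k) ∧
  ∃ y : Fin n → E,
    (∀ i, y i ∈ F) ∧
    (∀ i, LApply D n a (y i) = 0) ∧
    (∀ c : Fin n → E, (∀ i, c i ∈ k ∧ D (c i) = 0) → (∑ i, c i * y i) = 0 → ∀ i, c i = 0) ∧
    diffGen D k (Set.range y) = F

/-- `F` is a Picard–Vessiot extension of `k` for some monic linear differential operator. -/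
def IsPV {E : Type u} [Field E] (D : E → E) (k F : Subfield E) : Prop :=
  ∃ (n : ℕ) (a : Fin n → E), IsPVWith D k F n a

/-- Relative version: the differential subfield `F` is a Picard–Vessiot extension
of the differential subfield `kb ≤ F`. -/
def IsPVRel {E : Type u} [Field E] (D : E → E) (kb F : Subfield E)
    (hF : ∀ x ∈ F, D x ∈ F) : Prop :=
  IsPV (fun x : ↥F => (⟨D ↑x, hF ↑x x.2⟩ : ↥F)) (Subfield.comap F.subtype kb) ⊤

/-- The ambient differential field (with derivation `D`) is a strongly normal extension of
its differential subfield `k`: it is finitely generated as a field extension of `k`, has no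
new constants, and every differential embedding over `k` into a differential field extension
`M` lands in the compositum of the image of the base copy with the constants of `M`. -/
def IsSN {E : Type u} [Field E] (D : E → E) (k : Subfield E) : Prop :=
  (∀ x ∈ k, D x ∈ k) ∧
  (∃ s : Finset E, Subfield.closure (↑k ∪ ↑s) = (⊤ : Subfield E)) ∧
  (∀ x : E, D x = 0 → x ∈ k) ∧
  ∀ (M : DFld.{u}) (ι σ : E →+* M.carrier),
    (∀ x, ι (D x) = M.deriv (ι x)) →
    (∀ x, σ (D x) = M.deriv (σ x)) →
    (∀ x ∈ k, σ x = ι x) →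
    ∀ e : E, σ e ∈ Subfield.closure (Set.range ι ∪ {m : M.carrier | M.deriv m = 0})

/-- Relative version: the differential subfield `F` is a strongly normal extension of the
differential subfield `kb ≤ F`. -/
def IsSNRel {E : Type u} [Field E] (D : E → E) (kb F : Subfield E)
    (hF : ∀ x ∈ F, D x ∈ F) : Prop :=
  IsSN (fun x : ↥F => (⟨D ↑x, hF ↑x x.2⟩ : ↥F)) (Subfield.comap F.subtype kb)

/-- `K` is a finite field extension of the subfield `M`. -/
def FinExt {E : Type u} [Field E] (M K : Subfield E) : Prop :=
  ∃ h : M ≤ K,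
    letI : Algebra ↥M ↥K := (Subfield.inclusion h).toAlgebra
    Module.Finite ↥M ↥K

/-- The transcendence degree of the subfield `K` over the subfield `k`, as the supremum of the
cardinalities of subsets of `K` that are algebraically independent over `k`. -/
noncomputable def trdegOf {E : Type u} [Field E] (k K : Subfield E) : Cardinal.{u} :=
  ⨆ s : {s : Set E // s ⊆ (K : Set E) ∧ AlgebraicIndependent ↥k (fun x : ↥s => (x : E))},
    Cardinal.mk ↥(s.1)

/-- `K` and `M` are free over `k`: every finite subset of `K` that is algebraically
independent over `k` remains algebraically independent over `M`. -/
def FreeOver {E : Type u} [Field E] (k K M : Subfield E) : Prop :=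
  ∀ s : Finset E, (↑s : Set E) ⊆ (K : Set E) →
    AlgebraicIndependent ↥k (fun x : ↥(↑s : Set E) => (x : E)) →
    AlgebraicIndependent ↥M (fun x : ↥(↑s : Set E) => (x : E))

/-- `K` is a `k`-irreducible differential field: it is a finitely generated differential field
extension of `k` of transcendence degree at least 1, and every intermediate differential field
`k ⊂ M ⊆ K` has transcendence degree `0` or `trdeg(K|k)` over `k`. -/
def IsIrred {E : Type u} [Field E] (D : E → E) (k K : Subfield E) : Prop :=
  (∃ s : Finset E, diffGen D k ↑s = K) ∧
  1 ≤ trdegOf k K ∧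
  ∀ M : Subfield E, (∀ x ∈ M, D x ∈ M) → k < M → M ≤ K →
    trdegOf k M = 0 ∨ trdegOf k M = trdegOf k K

/-- `Kf` is a `d`-solvable extension of `k`: there is a tower of differential fields starting
at (a copy of) `k`, each step being a finite algebraic extension or a Picard–Vessiot extension
for an operator of order at most `d`, whose top contains (the copy of) `Kf`. -/
def IsDSolvable {E : Type u} [Field E] (D : E → E) (k Kf : Subfield E) (d : ℕ) : Prop :=
  ∃ (Ω : DFld.{u}) (j : E →+* Ω.carrier),
    (∀ x, j (D x) = Ω.deriv (j x)) ∧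
    ∃ (r : ℕ) (T : Fin (r + 1) → Subfield Ω.carrier),
      T 0 = Subfield.map j k ∧
      Subfield.map j Kf ≤ T (Fin.last r) ∧
      (∀ i, ∀ x ∈ T i, Ω.deriv x ∈ T i) ∧
      ∀ i : Fin r,
        FinExt (T i.castSucc) (T i.succ) ∨
        ∃ n ≤ d, ∃ a : Fin n → Ω.carrier, IsPVWith Ω.deriv (T i.castSucc) (T i.succ) n a

/-- `Kn` is generated over `kb`, as a differential field with the same constants, by one
solution `z` of an inhomogeneous equation `L(y) = b` (with `L` monic over `kb` of order
`n ≤ d` and `b ∈ kb`) together with an `n`-dimensional space (over the constants) of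
solutions of `L(y) = 0`. -/
def IsPVInhomLe {E : Type u} [Field E] (D : E → E) (kb Kn : Subfield E) (d : ℕ) : Prop :=
  kb ≤ Kn ∧ (∀ x ∈ kb, D x ∈ kb) ∧ (∀ x ∈ Kn, D x ∈ Kn) ∧
  (∀ x ∈ Kn, D x = 0 → x ∈ kb) ∧
  ∃ n, n ≤ d ∧ ∃ (a : Fin n → E) (b z : E) (y : Fin n → E),
    (∀ i, a i ∈ kb) ∧ b ∈ kb ∧ z ∈ Kn ∧ (∀ i, y i ∈ Kn) ∧
    LApply D n a z = b ∧
    (∀ i, LApply D n a (y i) = 0) ∧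
    (∀ c : Fin n → E, (∀ i, c i ∈ kb ∧ D (c i) = 0) → (∑ i, c i * y i) = 0 → ∀ i, c i = 0) ∧
    diffGen D kb (insert z (Set.range y)) = Kn

/-- `Kf` is a `d⁺`-solvable extension of `k`. -/
def IsDPlusSolvable {E : Type u} [Field E] (D : E → E) (k Kf : Subfield E) (d : ℕ) : Prop :=
  ∃ (Ω : DFld.{u}) (j : E →+* Ω.carrier),
    (∀ x, j (D x) = Ω.deriv (j x)) ∧
    ∃ (r : ℕ) (T : Fin (r + 1) → Subfield Ω.carrier),
      T 0 = Subfield.map j k ∧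
      Subfield.map j Kf ≤ T (Fin.last r) ∧
      (∀ i, ∀ x ∈ T i, Ω.deriv x ∈ T i) ∧
      ∀ i : Fin r,
        FinExt (T i.castSucc) (T i.succ) ∨ IsPVInhomLe Ω.deriv (T i.castSucc) (T i.succ) d

/-- `TSet D kb K` is the set of elements of `K` annihilated by some monic linear differential
operator with coefficients in `kb`. -/
def TSet {E : Type u} [Field E] (D : E → E) (kb K : Subfield E) : Set E :=
  {x | x ∈ K ∧ ∃ (n : ℕ) (a : Fin n → E), (∀ i, a i ∈ kb) ∧ LApply D n a x = 0}

/-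
Rescaling `D` to `δ := x₂⁻¹ • D` keeps the constants and turns the system into `δ x₁ = 1`,
`δ x₂ = h`, so `F = K(x₂)` arises from `K = C(x₁)` by adjoining a primitive of `h`. If `h = δ g`
with `g ∈ K`, then `x₂ - g` is a new constant. Otherwise `K[x₂]` is differentially simple: the monic
generator of a nonzero differential ideal divides its derivative, which has smaller degree and hence
vanishes, and comparing the two top coefficients of a nonscalar constant would exhibit a primitive
of `h` in `K`. The denominators of a constant of `K(x₂)` form a nonzero differential ideal, so the
constant is a polynomial, hence lies in `K`. The same argument for `K = C(x₁)` over `C`, where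
`δ x₁ = 1` is not a derivative, puts the constant into `C`.
-/

section Primitive

open Polynomial Differential IntermediateField

section Ring

variable {R : Type*} [CommRing R] [Differential R]

lemma coeff_implicitDeriv_C (h : R) (p : R[X]) (n : ℕ) :
    (implicitDeriv (C h) p).coeff n = (p.coeff n)′ + h * (p.coeff (n + 1) * (n + 1)) := by
  simp [implicitDeriv, coeff_derivative]

lemma degree_implicitDeriv_C_lt [Nontrivial R] {h : R} {p : R[X]} (hp : p.Monic) :
    (implicitDeriv (C h) p).degree < p.degree := by
  rw [degree_eq_natDegree hp.ne_zero, degree_lt_iff_coeff_zero]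
  intro m hm
  have hsucc : p.coeff (m + 1) = 0 := coeff_eq_zero_of_natDegree_lt (by lia)
  have hconst : (p.coeff m)′ = 0 := by
    rcases hm.eq_or_lt with rfl | hm
    · rw [hp.coeff_natDegree, Derivation.map_one_eq_zero]
    · rw [coeff_eq_zero_of_natDegree_lt hm, map_zero]
  rw [coeff_implicitDeriv_C, hsucc, hconst, zero_mul, mul_zero, add_zero]

end Ring

variable {K : Type*} [Field K] [Differential K] {h : K}

lemma natDegree_eq_zero_of_implicitDeriv_C_eq_zero [CharZero K] (hh : ¬∃ g : K, g′ = h)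
    {p : K[X]} (hp : implicitDeriv (C h) p = 0) : p.natDegree = 0 := by
  by_contra hdeg
  obtain ⟨n, hn⟩ := Nat.exists_eq_succ_of_ne_zero hdeg
  set a := p.coeff (n + 1)
  set b := p.coeff n
  have hcoeff (m : ℕ) : (p.coeff m)′ + h * (p.coeff (m + 1) * (m + 1)) = 0 := by
    rw [← coeff_implicitDeriv_C, hp, coeff_zero]
  have ha : a ≠ 0 := by
    have hp0 : p ≠ 0 := ne_zero_of_natDegree_gt (Nat.pos_of_ne_zero hdeg)
    rwa [← leadingCoeff_ne_zero, leadingCoeff, hn] at hp0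
  have ha' : a′ = 0 := by
    have htop := hcoeff (n + 1)
    rwa [coeff_eq_zero_of_natDegree_lt (n := n + 1 + 1) (by lia), zero_mul, mul_zero,
      add_zero] at htop
  have hb' : b′ + h * (a * (n + 1)) = 0 := hcoeff n
  have hn0 : (n + 1 : K) ≠ 0 := n.cast_add_one_ne_zero
  have hconst : (a * (n + 1))′ = 0 := by simp [ha']
  refine hh ⟨-b / (a * (n + 1)), ?_⟩
  rw [Derivation.leibniz_div_const _ _ _ hconst, map_neg, smul_eq_mul,
    inv_mul_eq_iff_eq_mul₀ (mul_ne_zero ha hn0)]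
  linear_combination -hb'

lemma ideal_eq_top_of_implicitDeriv_C_mem [CharZero K] (hh : ¬∃ g : K, g′ = h)
    {I : Ideal K[X]} (hI : I ≠ ⊥) (hstable : ∀ q ∈ I, implicitDeriv (C h) q ∈ I) : I = ⊤ := by
  obtain ⟨q, hq, rfl⟩ : ∃ q : K[X], q.Monic ∧ I = Ideal.span {q} := by
    classical
    obtain ⟨q, rfl⟩ := (inferInstance : I.IsPrincipal).principal
    have hq : q ≠ 0 := by rintro rfl; simp at hI
    exact ⟨normalize q, monic_normalize hq,
      (Ideal.span_singleton_eq_span_singleton.mpr (normalize_associated q)).symm⟩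
  have hdvd : q ∣ implicitDeriv (C h) q :=
    Ideal.mem_span_singleton.mp (hstable q (Ideal.mem_span_singleton_self q))
  have hzero : implicitDeriv (C h) q = 0 :=
    eq_zero_of_dvd_of_degree_lt hdvd (degree_implicitDeriv_C_lt hq)
  have hdeg : q.natDegree = 0 := natDegree_eq_zero_of_implicitDeriv_C_eq_zero hh hzero
  rw [hq.natDegree_eq_zero.mp hdeg, Ideal.span_singleton_one]

section Denominator

variable {A B : Type*} [CommRing A] [CommRing B] [Algebra A B]

variable (A) in
/-- The ideal of denominators of `z` with respect to `t`: the polynomials `q` over `A` such that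
`z * q(t)` is a polynomial in `t`. -/
def denominatorIdeal (t z : B) : Ideal A[X] where
  carrier := {q | ∃ p : A[X], z * aeval t q = aeval t p}
  zero_mem' := ⟨0, by simp⟩
  add_mem' := by
    rintro q₁ q₂ ⟨p₁, h₁⟩ ⟨p₂, h₂⟩
    exact ⟨p₁ + p₂, by rw [map_add, map_add, mul_add, h₁, h₂]⟩
  smul_mem' := by
    rintro r q ⟨p, hp⟩
    exact ⟨r * p, by rw [smul_eq_mul, map_mul, map_mul, mul_left_comm, hp]⟩

lemma mem_denominatorIdeal {t z : B} {q : A[X]} :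
    q ∈ denominatorIdeal A t z ↔ ∃ p : A[X], z * aeval t q = aeval t p :=
  Iff.rfl

lemma implicitDeriv_mem_denominatorIdeal [Differential A] [Differential B]
    [DifferentialAlgebra A B] {t z : B} {v : A[X]} (ht : t′ = aeval t v) (hz : z′ = 0)
    {q : A[X]} (hq : q ∈ denominatorIdeal A t z) :
    implicitDeriv v q ∈ denominatorIdeal A t z := by
  obtain ⟨p, hp⟩ := hq
  refine ⟨implicitDeriv v p, ?_⟩
  rw [← deriv_aeval_eq_implicitDeriv t v ht, ← deriv_aeval_eq_implicitDeriv t v ht, ← hp,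
    Derivation.leibniz, hz, smul_zero, add_zero, smul_eq_mul]

end Denominator

lemma denominatorIdeal_ne_bot {k E : Type*} [Field k] [Field E] [Algebra k E] {t z : E}
    (hz : z ∈ k⟮t⟯) : denominatorIdeal k t z ≠ ⊥ := by
  obtain ⟨r, s, rfl⟩ := (mem_adjoin_simple_iff k z).mp hz
  rw [Submodule.ne_bot_iff]
  by_cases hs : aeval t s = 0
  · exact ⟨1, ⟨0, by simp [hs]⟩, one_ne_zero⟩
  · exact ⟨s, ⟨r, div_mul_cancel₀ _ hs⟩, by rintro rfl; simp at hs⟩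

variable [CharZero K] {E : Type*} [Field E] [Differential E] [Algebra K E]
  [DifferentialAlgebra K E] {t z : E}

lemma mem_range_algebraMap_of_deriv_eq_zero (htr : Transcendental K t)
    (ht : t′ = algebraMap K E h) (hh : ¬∃ g : K, g′ = h) (hz : z ∈ K⟮t⟯) (hz' : z′ = 0) :
    z ∈ Set.range (algebraMap K E) := by
  have ht' : t′ = aeval t (C h) := by rw [ht, aeval_C]
  have htop : denominatorIdeal K t z = ⊤ :=
    ideal_eq_top_of_implicitDeriv_C_mem hh (denominatorIdeal_ne_bot hz) fun _ hq ↦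
      implicitDeriv_mem_denominatorIdeal ht' hz' hq
  obtain ⟨p, hp⟩ := mem_denominatorIdeal.mp ((Ideal.eq_top_iff_one _).mp htop)
  rw [map_one, mul_one] at hp
  have hconst : implicitDeriv (C h) p = 0 := by
    apply transcendental_iff_injective.mp htr
    rw [← deriv_aeval_eq_implicitDeriv t _ ht', ← hp, hz', map_zero]
  have hdeg : p.natDegree = 0 := natDegree_eq_zero_of_implicitDeriv_C_eq_zero hh hconst
  obtain ⟨a, rfl⟩ := natDegree_eq_zero.mp hdeg
  exact ⟨a, by rw [hp, aeval_C]⟩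

theorem exists_deriv_eq_zero_notMem_range_algebraMap_iff (htr : Transcendental K t)
    (ht : t′ = algebraMap K E h) :
    (∃ z ∈ K⟮t⟯, z′ = 0 ∧ z ∉ Set.range (algebraMap K E)) ↔ ∃ g : K, g′ = h := by
  constructor
  · rintro ⟨z, hz, hz', hzK⟩
    by_contra hh
    exact hzK (mem_range_algebraMap_of_deriv_eq_zero htr ht hh hz hz')
  · rintro ⟨g, hg⟩
    refine ⟨t - algebraMap K E g, sub_mem (mem_adjoin_simple_self K t) (K⟮t⟯.algebraMap_mem g),
      by rw [map_sub, ht, deriv_algebraMap, hg, sub_self], ?_⟩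
    rintro ⟨a, ha⟩
    refine htr ?_
    rw [← sub_add_cancel t (algebraMap K E g), ← ha, ← map_add]
    exact isAlgebraic_algebraMap _

end Primitive

section Subfield

variable {F : Type*} [Field F]

lemma derivation_mem_closure {R : Type*} [CommRing R] [Algebra R F] (D : Derivation R F F)
    {S : Set F} (hS : ∀ s ∈ S, D s ∈ Subfield.closure S) {a : F} (ha : a ∈ Subfield.closure S) :
    D a ∈ Subfield.closure S := by
  induction ha using Subfield.closure_induction with
  | mem a ha => exact hS a ha
  | one => rw [D.map_one_eq_zero]; exact zero_mem _
  | add a b _ _ hDa hDb => rw [map_add]; exact add_mem hDa hDb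
  | neg a _ hDa => rw [map_neg]; exact neg_mem hDa
  | inv a ha hDa =>
    rw [D.leibniz_inv, smul_eq_mul]
    exact mul_mem (neg_mem (pow_mem (inv_mem ha) 2)) hDa
  | mul a b ha hb hDa hDb =>
    rw [D.leibniz, smul_eq_mul, smul_eq_mul]
    exact add_mem (mul_mem ha hDb) (mul_mem hb hDa)

/-- The derivation induced by `D` on a subfield `K` stable under `D`, making `K` a differential
field. -/
def restrictDerivation (D : Derivation ℤ F F) (K : Subfield F) (hK : ∀ a ∈ K, D a ∈ K) :
    Derivation ℤ K K :=
  Derivation.mk' ((D.toLinearMap.toAddMonoidHom.comp K.subtype.toAddMonoidHom).codRestrict K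
      (fun a ↦ hK a a.2)).toIntLinearMap
    fun a b ↦ Subtype.ext (D.leibniz (a : F) b)

lemma toSubfield_adjoin_eq_closure (K : Subfield F) (S : Set F) :
    (IntermediateField.adjoin K S).toSubfield = Subfield.closure (K ∪ S) := by
  rw [IntermediateField.adjoin_toSubfield]
  exact congrArg (fun A : Set F ↦ Subfield.closure (A ∪ S)) Subtype.range_coe

lemma transcendental_closure_image {ι : Type*} {x : ι → F} {C : Subfield F}
    (hx : AlgebraicIndependent C x) {s : Set ι} {i : ι} (hi : i ∉ s) :
    Transcendental (Subfield.closure (C ∪ x '' s)) (x i) := by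
  rw [← toSubfield_adjoin_eq_closure]
  exact IntermediateField.transcendental_adjoin_iff.mpr (hx.transcendental_adjoin hi)

variable [CharZero F] (D : Derivation ℤ F F)

theorem exists_derivation_eq_zero_notMem_iff {K : Subfield F} (hK : ∀ a ∈ K, D a ∈ K) {t : F}
    (htr : Transcendental K t) (ht : D t ∈ K) :
    (∃ z ∈ Subfield.closure (K ∪ {t}), D z = 0 ∧ z ∉ K) ↔ ∃ g ∈ K, D g = D t := by
  let _ : Differential F := ⟨D⟩
  let _ : Differential K := ⟨restrictDerivation D K hK⟩
  have _ : DifferentialAlgebra K F := ⟨fun _ ↦ rfl⟩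
  have hrange : Set.range (algebraMap K F) = K := Subtype.range_coe
  have hmain := exists_deriv_eq_zero_notMem_range_algebraMap_iff (h := ⟨D t, ht⟩) htr rfl
  simp_rw [hrange, ← IntermediateField.mem_toSubfield, toSubfield_adjoin_eq_closure] at hmain
  exact hmain.trans ⟨fun ⟨g, hg⟩ ↦ ⟨g, g.2, congrArg Subtype.val hg⟩,
    fun ⟨g, hgK, hg⟩ ↦ ⟨⟨g, hgK⟩, Subtype.ext hg⟩⟩

lemma mem_of_derivation_eq_zero {C : Subfield F} (hC : ∀ c ∈ C, D c = 0) {t : F}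
    (htr : Transcendental C t) (ht : D t ∈ C) (ht0 : D t ≠ 0) {z : F}
    (hz : z ∈ Subfield.closure (C ∪ {t})) (hDz : D z = 0) : z ∈ C := by
  by_contra hzC
  have hstable : ∀ c ∈ C, D c ∈ C := fun c hc ↦ hC c hc ▸ zero_mem C
  obtain ⟨g, hg, hDg⟩ :=
    (exists_derivation_eq_zero_notMem_iff D hstable htr ht).mp ⟨z, hz, hDz, hzC⟩
  exact ht0 (hDg ▸ hC g hg)

theorem exists_constant_notMem_iff_exists_primitive {C : Subfield F} (hC : ∀ c ∈ C, D c = 0)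
    {x₁ x₂ : F} (hind : AlgebraicIndependent C ![x₁, x₂])
    (hgen : Subfield.closure (C ∪ {x₁, x₂}) = (⊤ : Subfield F))
    (hx₁ : D x₁ ∈ C) (hx₁0 : D x₁ ≠ 0) (hx₂ : D x₂ ∈ Subfield.closure (C ∪ {x₁})) :
    (∃ z, D z = 0 ∧ z ∉ C) ↔ ∃ g ∈ Subfield.closure (C ∪ {x₁}), D g = D x₂ := by
  set K := Subfield.closure ((C : Set F) ∪ {x₁}) with hKdef
  have hCK : C ≤ K := fun c hc ↦ Subfield.subset_closure (Or.inl hc)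
  have hKD : ∀ a ∈ K, D a ∈ K := fun a ↦ derivation_mem_closure D (by
    rintro c (hc | rfl)
    · exact hC c hc ▸ zero_mem K
    · exact hCK hx₁)
  have htr : Transcendental K x₂ := by
    have htr := transcendental_closure_image hind (s := {0}) (i := 1) (by simp)
    rwa [Set.image_singleton] at htr
  have htop : Subfield.closure ((K : Set F) ∪ {x₂}) = ⊤ := by
    rw [Subfield.closure_union, Subfield.closure_eq, hKdef, ← Subfield.closure_union,
      Set.union_assoc, Set.singleton_union, hgen]
  have hconst {z : F} (hz : z ∈ K) (hDz : D z = 0) : z ∈ C :=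
    mem_of_derivation_eq_zero D hC (hind.transcendental 0) hx₁ hx₁0 hz hDz
  rw [← exists_derivation_eq_zero_notMem_iff D hKD htr hx₂, htop]
  exact ⟨fun ⟨z, hDz, hzC⟩ ↦ ⟨z, Subfield.mem_top z, hDz, fun hzK ↦ hzC (hconst hzK hDz)⟩,
    fun ⟨z, _, hDz, hzK⟩ ↦ ⟨z, hDz, fun hzC ↦ hzK (hCK hzC)⟩⟩

end Subfield

theorem stmt13_general {F : Type u} [Field F] [CharZero F] (D : Derivation ℤ F F)
    (C : Subfield F) (x₁ x₂ : F)
    (hind : AlgebraicIndependent ↥C ![x₁, x₂])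
    (hgen : Subfield.closure (↑C ∪ {x₁, x₂}) = (⊤ : Subfield F))
    (hCconst : ∀ c ∈ C, D c = 0)
    (h : F) (hh : h ∈ Subfield.closure (↑C ∪ {x₁}))
    (hx1 : D x₁ = x₂) (hx2 : D x₂ = x₂ * h) :
    (∃ z : F, D z = 0 ∧ z ∉ C) ↔
      ∃ g ∈ Subfield.closure (↑C ∪ {x₁}), D g = x₂ * h := by
  have hx₂0 : x₂ ≠ 0 := hind.ne_zero 1
  let δ : Derivation ℤ F F := x₂⁻¹ • D
  have hδ (a b : F) : δ a = b ↔ D a = x₂ * b := inv_mul_eq_iff_eq_mul₀ hx₂0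
  have hδC : ∀ c ∈ C, δ c = 0 := fun c hc ↦ by rw [hδ, hCconst c hc, mul_zero]
  have hδx₁ : δ x₁ = 1 := by rw [hδ, hx1, mul_one]
  have hδx₂ : δ x₂ = h := by rw [hδ, hx2]
  have hmain := exists_constant_notMem_iff_exists_primitive δ hδC hind hgen
    (hδx₁ ▸ one_mem C) (hδx₁ ▸ one_ne_zero) (hδx₂ ▸ hh)
  simpa only [hδx₂, hδ, mul_zero] using hmain

/-- Let `F = C(x₁,x₂)` with derivation determined by `D x₁ = x₂` and
`D x₂ = x₂·h(x₁)`, where `h ∈ C(x₁)` is nonzero. Then `F` has a constant not in `C` iff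
`h = ∂g/∂x₁` for some `g ∈ C(x₁)`. (Since `D` restricted to `C(x₁)` satisfies
`D g = (∂g/∂x₁)·D x₁ = (∂g/∂x₁)·x₂`, the condition `h = ∂g/∂x₁` is expressed as
`D g = x₂ * h`.) -/
theorem stmt13 {F : Type u} [Field F] [CharZero F] (D : Derivation ℤ F F)
    (C : Subfield F) (hCalg : IsAlgClosed ↥C)
    (x₁ x₂ : F)
    (hind : AlgebraicIndependent ↥C ![x₁, x₂])
    (hgen : Subfield.closure (↑C ∪ {x₁, x₂}) = (⊤ : Subfield F))
    (hCconst : ∀ c ∈ C, D c = 0)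
    (h : F) (hh : h ∈ Subfield.closure (↑C ∪ {x₁})) (hh0 : h ≠ 0)
    (hx1 : D x₁ = x₂) (hx2 : D x₂ = x₂ * h) :
    (∃ z : F, D z = 0 ∧ z ∉ C) ↔
      ∃ g ∈ Subfield.closure (↑C ∪ {x₁}), D g = x₂ * h := by
  exact stmt13_general D C x₁ x₂ hind hgen hCconst h hh hx1 hx2
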